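/- Let λ be a nonzero edge l-connected partition such that e_l(λ) is not divisible by l, and let H be a skew l-hook of λ. Then the partition λ_H obtained by removing H is edge l-connected, e_l(λ_H) is not divisible by l, and (λ_H)_1 = λ_1 (the first part is unchanged). -/

import Mathlib

noncomputable section

/-- `p : ℕ → ℕ` represents the partition `λ` with `p i = λ_{i+1}` (0-indexed parts):
a weakly decreasing, eventually zero sequence. -/
def IsPartition (p : ℕ → ℕ) : Prop :=
  (∀ i j, i ≤ j → p j ≤ p i) ∧ ∃ N, ∀ i, N ≤ i → p i = 0

/-- `ℓ(λ)`, the number of nonzero parts. -/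
def plen (p : ℕ → ℕ) : ℕ := sInf {N | p N = 0}

/-- the degree (number of boxes) of the partition. -/
def pdeg (p : ℕ → ℕ) : ℕ := ∑ i ∈ Finset.range (plen p), p i

/-- `λ` is `l`-regular: no `l` consecutive parts are equal and nonzero. -/
def IsLRegular (l : ℕ) (p : ℕ → ℕ) : Prop :=
  ∀ i, p i ≠ 0 → p (i + l - 1) ≠ p i

/-- `λ` is `l`-restricted: `λ_i - λ_{i+1} < l` for all `i`. -/
def IsLRestricted (l : ℕ) (p : ℕ → ℕ) : Prop :=
  ∀ i, p i - p (i + 1) < l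

/-- the transpose (conjugate) partition. -/
def conjP (p : ℕ → ℕ) : ℕ → ℕ :=
  fun j => ((Finset.range (plen p)).filter fun i => j < p i).card

/-- the minimal `h ≥ 1` with `λ_1 - λ_{h+1} + h ≥ l`: when `e(λ) > l`, the first
`l`-segment of the `l`-edge lies in rows `1, …, h`. -/
def firstSeg (l : ℕ) (p : ℕ → ℕ) : ℕ := sInf {h | 1 ≤ h ∧ l ≤ p 0 - p h + h}

/-- removal of the `l`-edge (with fuel): if `e(λ) ≤ l` the whole edge is removed,
otherwise the first `l`-segment is removed from rows `1, …, h` (`h = firstSeg`) and one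
recurses on `(λ_{h+1}, λ_{h+2}, …)`. -/
def removeLEdgeAux (l : ℕ) : ℕ → (ℕ → ℕ) → ℕ → ℕ
  | 0, _ => fun _ => 0
  | n + 1, p =>
    if p 0 = 0 then fun _ => 0
    else if p 0 + plen p - 1 ≤ l then fun i => p (i + 1) - 1
    else fun i =>
      if i + 1 < firstSeg l p then p (i + 1) - 1
      else if i + 1 = firstSeg l p then p 0 + firstSeg l p - 1 - l
      else removeLEdgeAux l n (fun j => p (j + firstSeg l p)) (i - firstSeg l p)

/-- the partition obtained by removing the `l`-edge of `λ`. -/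
def removeLEdge (l : ℕ) (p : ℕ → ℕ) : ℕ → ℕ := removeLEdgeAux l (plen p) p

/-- `e_l(λ)`, the number of nodes of the `l`-edge. -/
def elen (l : ℕ) (p : ℕ → ℕ) : ℕ := pdeg p - pdeg (removeLEdge l p)

/-- the length of `Mull(λ)` prescribed by the defining recursion of the Mullineux map. -/
def mullLen (l : ℕ) (p : ℕ → ℕ) : ℕ :=
  if l ∣ elen l p then elen l p - plen p else elen l p - plen p + 1

/-- the Mullineux map (with fuel): `Mull(0) = 0` and, for `λ ≠ 0` `l`-regular with `ν`
obtained from `λ` by removing the `l`-edge, `Mull(λ)` is the unique `l`-regular partition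
whose `l`-edge removal leaves `Mull(ν)` and whose length is `e_l(λ) - ℓ(λ)` if
`l ∣ e_l(λ)` and `e_l(λ) - ℓ(λ) + 1` otherwise. -/
def mullAux (l : ℕ) : ℕ → (ℕ → ℕ) → ℕ → ℕ
  | 0, _ => fun _ => 0
  | n + 1, p =>
    if p 0 = 0 then fun _ => 0
    else
      Classical.epsilon fun μ : ℕ → ℕ =>
        IsPartition μ ∧ IsLRegular l μ ∧
          removeLEdge l μ = mullAux l n (removeLEdge l p) ∧ plen μ = mullLen l p

/-- the Mullineux map. -/
def mull (l : ℕ) (p : ℕ → ℕ) : ℕ → ℕ := mullAux l (pdeg p) p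

/-- the list of Mullineux components (with fuel). -/
def mullCompsAux (l : ℕ) : ℕ → (ℕ → ℕ) → List (ℕ → ℕ)
  | 0, _ => []
  | n + 1, p =>
    if p 0 = 0 then []
    else if elen l p ≤ l then [p]
    else (fun i => if i < firstSeg l p then p i else 0) ::
      mullCompsAux l n (fun j => p (j + firstSeg l p))

/-- the Mullineux components of `λ`. -/
def mullComps (l : ℕ) (p : ℕ → ℕ) : List (ℕ → ℕ) := mullCompsAux l (plen p) p

/-- edge `l`-connectedness (with fuel): consecutive Mullineux components `α, ρ` satisfy
`α_1 - ρ_1 + ℓ(α) = l`. -/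
def edgeConnAux (l : ℕ) : ℕ → (ℕ → ℕ) → Prop
  | 0, _ => True
  | n + 1, p =>
    if elen l p ≤ l then True
    else p 0 + firstSeg l p = l + p (firstSeg l p) ∧
      edgeConnAux l n fun j => p (j + firstSeg l p)

/-- `λ` is edge `l`-connected. -/
def EdgeLConnected (l : ℕ) (p : ℕ → ℕ) : Prop := edgeConnAux l (plen p) p

/-- the node `(i+1, λ_{i+1})` (in row `i+1`, 1-indexed) is a removable node. -/
def Removable (p : ℕ → ℕ) (i : ℕ) : Prop := p (i + 1) < p i

/-- removal of the removable node in row `i+1`. -/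
def removeNode (p : ℕ → ℕ) (i : ℕ) : ℕ → ℕ := fun k => if k = i then p i - 1 else p k

/-- there is an addable node `(i+1, λ_{i+1} + 1)` in row `i+1` (1-indexed). -/
def Addable (p : ℕ → ℕ) (i : ℕ) : Prop := i ≤ plen p ∧ (i = 0 ∨ p i < p (i - 1))

/-- the removable node in row `i+1` is suitable: its residue (mod `l`) differs from the
residue of every lower addable node. -/
def Suitable (l : ℕ) (p : ℕ → ℕ) (i : ℕ) : Prop :=
  Removable p i ∧ ∀ j, i < j → Addable p j →
    ¬ ((p j : ℤ) - (j : ℤ) ≡ (p i : ℤ) - (i : ℤ) - 1 [ZMOD (l : ℤ)])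

/-- the removable node in row `i+1` is co-suitable: its transpose node is a suitable
node of the transpose partition. -/
def CoSuitable (l : ℕ) (p : ℕ → ℕ) (i : ℕ) : Prop :=
  Removable p i ∧ Suitable l (conjP p) (p i - 1)

/-- `Φ_m`: partitions with at most `m` parts and `λ_1 - λ_m ≤ l - m`. -/
def Phi (l m : ℕ) : Set (ℕ → ℕ) :=
  {p | IsPartition p ∧ plen p ≤ m ∧ p 0 - p (m - 1) ≤ l - m}

/-- `λ` is `m`-distinguished: `λ = λ⁰ + lλ̄` with
`λ⁰ = ((l-m)^k, a_1, …, a_m)`, `l - m > a_1 ≥ … ≥ a_m ≥ 0`, and `λ̄` a partition with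
`λ̄_1 ≤ m - 1`. -/
def IsDistinguished (l m : ℕ) (p : ℕ → ℕ) : Prop :=
  ∃ (k : ℕ) (a : ℕ → ℕ) (pb : ℕ → ℕ),
    IsPartition pb ∧ pb 0 < m ∧
    (∀ i j, i ≤ j → a j ≤ a i) ∧ a 0 < l - m ∧ (∀ i, m ≤ i → a i = 0) ∧
    ∀ i, p i = (if i < k then l - m else a (i - k)) + l * pb i

/-- `q` is obtained from `p` by removing a skew `l`-hook (spanning rows `a+1, …, b+1`,
1-indexed). -/
def IsHookRemoval (l : ℕ) (p q : ℕ → ℕ) : Prop :=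
  IsPartition q ∧ ∃ a b : ℕ, a ≤ b ∧
    (∀ i, i < a → q i = p i) ∧
    (∀ i, a ≤ i → i < b → q i + 1 = p (i + 1)) ∧
    q b + l = p a + (b - a) ∧
    ∀ i, b < i → q i = p i

/-- `q` is the `l`-core of `p`: obtained by repeatedly removing skew `l`-hooks until
none remain. -/
def IsCoreOf (l : ℕ) (p q : ℕ → ℕ) : Prop :=
  Relation.ReflTransGen (fun x y => IsHookRemoval l x y) p q ∧ ∀ r, ¬ IsHookRemoval l q r

/-- the `l`-core of `p`. -/
def lCore (l : ℕ) (p : ℕ → ℕ) : ℕ → ℕ := Classical.epsilon (IsCoreOf l p)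


/-!
A nonzero partition is edge `l`-connected with `l ∤ e_l(λ)` exactly when, on its abacus with
`l` runners, the runner of the first bead `λ_1` has no gap below that bead. Indeed the first
`l`-segment ends in the first row `h` for which the bead of `λ_{h+1}` lies at most at
`λ_1 - l`, so the connectedness condition `λ_1 - λ_{h+1} + h = l` says that `λ_1 - l` is
occupied, and one recurses; when `e(λ) ≤ l`, the first gap is at `1 - ℓ(λ) = λ_1 - e(λ)`, hence
the runner is full if and only if `e(λ) ≠ l`.

Removing a skew `l`-hook moves one bead from `x` to the gap `x - l`. No bead of a full runner has
a gap `l` places below it, so the leading runner is not touched.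
-/

/-- The partition `(λ_{h+1}, λ_{h+2}, …)` left after deleting the first `h` parts. -/
def dropParts (h : ℕ) (p : ℕ → ℕ) : ℕ → ℕ := fun j => p (j + h)

/-- `e(λ)`, the number of nodes of the edge; for the zero partition the truncated
subtraction gives `0`. -/
def edgeLen (p : ℕ → ℕ) : ℕ := p 0 + plen p - 1

/-- The beta-number `λ_{i+1} - i` of the `(i+1)`-st part (the charge-zero convention). -/
def betaNumber (p : ℕ → ℕ) (i : ℕ) : ℤ := (p i : ℤ) - i

/-- The set of beta-numbers of `λ`, i.e. the bead positions on its abacus. Since `λ` has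
infinitely many zero parts, all sufficiently negative positions are occupied. -/
def betaSet (p : ℕ → ℕ) : Set ℤ := Set.range (betaNumber p)

/-- On the abacus with `l` runners, the runner of the first bead `λ_1` has no gap below it. -/
def LeadingRunnerFull (l : ℕ) (p : ℕ → ℕ) : Prop :=
  ∀ k : ℕ, (p 0 : ℤ) - k * l ∈ betaSet p

section

variable {l : ℕ} {p q : ℕ → ℕ}

namespace IsPartition

theorem antitone (hp : IsPartition p) : Antitone p := fun i j => hp.1 i j

theorem plen_le_iff (hp : IsPartition p) {i : ℕ} : plen p ≤ i ↔ p i = 0 := by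
  obtain ⟨N, hN⟩ := hp.2
  have hzero : p (plen p) = 0 := Nat.sInf_mem (s := {N | p N = 0}) ⟨N, hN N le_rfl⟩
  exact ⟨fun hi => Nat.le_zero.1 (hzero ▸ hp.antitone hi), fun hi => Nat.sInf_le hi⟩

theorem lt_plen_iff (hp : IsPartition p) {i : ℕ} : i < plen p ↔ p i ≠ 0 := by
  rw [← not_le, hp.plen_le_iff]

theorem isPartition_dropParts (hp : IsPartition p) (h : ℕ) : IsPartition (dropParts h p) := by
  obtain ⟨N, hN⟩ := hp.2
  exact ⟨fun i j hij => hp.antitone (by lia), N, fun i hi => hN _ (by lia)⟩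

theorem plen_dropParts (hp : IsPartition p) (h : ℕ) :
    plen (dropParts h p) = plen p - h :=
  eq_of_forall_ge_iff fun i => by
    rw [(hp.isPartition_dropParts h).plen_le_iff, tsub_le_iff_right, hp.plen_le_iff, dropParts]

theorem pdeg_eq_sum_range (hp : IsPartition p) {N : ℕ} (hN : plen p ≤ N) :
    pdeg p = ∑ i ∈ Finset.range N, p i :=
  (Finset.eventually_constant_sum (fun _ => hp.plen_le_iff.1) hN).symm

theorem pdeg_eq_sum_range_add_pdeg_dropParts (hp : IsPartition p) (h : ℕ) :
    pdeg p = ∑ i ∈ Finset.range h, p i + pdeg (dropParts h p) := by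
  rw [hp.pdeg_eq_sum_range (N := h + plen p) (by lia), Finset.sum_range_add,
    (hp.isPartition_dropParts h).pdeg_eq_sum_range (N := plen p) (by rw [hp.plen_dropParts]; lia)]
  simp only [dropParts, add_comm]

theorem pdeg_le_pdeg (hp : IsPartition p) (hq : IsPartition q) (hqp : ∀ i, q i ≤ p i) :
    pdeg q ≤ pdeg p := by
  have hlen : plen q ≤ plen p :=
    hq.plen_le_iff.2 (Nat.le_zero.1 (hp.plen_le_iff.1 le_rfl ▸ hqp (plen p)))
  rw [hq.pdeg_eq_sum_range hlen, pdeg]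
  exact Finset.sum_le_sum fun i _ => hqp i

/-! ### The first `l`-segment -/

theorem firstSeg_le_iff (hp : IsPartition p) (hl : 0 < l) {i : ℕ} :
    firstSeg l p ≤ i ↔ l + p i ≤ p 0 + i := by
  have hfirst := hp.antitone i.zero_le
  refine ⟨fun hi => ?_, fun hi => Nat.sInf_le (s := {h | 1 ≤ h ∧ l ≤ p 0 - p h + h}) ?_⟩
  · have hspec : 1 ≤ firstSeg l p ∧ l ≤ p 0 - p (firstSeg l p) + firstSeg l p :=
      Nat.sInf_mem (s := {h | 1 ≤ h ∧ l ≤ p 0 - p h + h}) ⟨l, hl, by lia⟩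
    have hmono := hp.antitone hi
    have := hp.antitone (firstSeg l p).zero_le
    lia
  · rcases i.eq_zero_or_pos with rfl | hpos
    · lia
    · exact ⟨hpos, by lia⟩

theorem firstSeg_pos (hp : IsPartition p) (hl : 0 < l) : 0 < firstSeg l p := by
  by_contra! h
  have := (hp.firstSeg_le_iff hl).1 h
  lia

theorem plen_pos_of_lt_edgeLen (hp : IsPartition p) (h : l < edgeLen p) : 0 < plen p := by
  by_contra! hlen
  have := hp.plen_le_iff.1 hlen
  rw [edgeLen] at h
  lia

theorem firstSeg_le_plen (hp : IsPartition p) (hl : 0 < l) (h : l < edgeLen p) :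
    firstSeg l p ≤ plen p := by
  rw [edgeLen] at h
  rw [hp.firstSeg_le_iff hl, hp.plen_le_iff.1 le_rfl]
  lia

theorem lt_add_firstSeg (hp : IsPartition p) (hl : 0 < l) (h : l < edgeLen p) :
    l < p 0 + firstSeg l p := by
  have hspec := (hp.firstSeg_le_iff hl).1 le_rfl
  rw [edgeLen] at h
  by_cases hzero : p (firstSeg l p) = 0
  · have := hp.plen_le_iff.2 hzero
    lia
  · lia

theorem plen_dropParts_firstSeg_lt (hp : IsPartition p) (hl : 0 < l) (h : l < edgeLen p) :
    plen (dropParts (firstSeg l p) p) < plen p := by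
  have := hp.firstSeg_pos hl
  have := hp.plen_pos_of_lt_edgeLen h
  rw [hp.plen_dropParts]
  lia

@[elab_as_elim]
theorem segment_induction (hl : 0 < l) {motive : (p : ℕ → ℕ) → IsPartition p → Prop}
    (short : ∀ p (hp : IsPartition p), edgeLen p ≤ l → motive p hp)
    (long : ∀ p (hp : IsPartition p), l < edgeLen p →
      motive (dropParts (firstSeg l p) p) (hp.isPartition_dropParts _) → motive p hp)
    (hp : IsPartition p) : motive p hp := by
  induction hn : plen p using Nat.strong_induction_on generalizing p with
  | _ n ih =>
    rcases le_or_gt (edgeLen p) l with h | h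
    · exact short p hp h
    · exact long p hp h (ih _ (hn ▸ hp.plen_dropParts_firstSeg_lt hl h) _ rfl)

/-! ### Removing the `l`-edge -/

theorem removeLEdgeAux_congr_fuel (hp : IsPartition p) (hl : 0 < l) {m n : ℕ}
    (hm : plen p ≤ m) (hn : plen p ≤ n) : removeLEdgeAux l m p = removeLEdgeAux l n p := by
  induction m generalizing n p with
  | zero => cases n <;> simp only [removeLEdgeAux, hp.plen_le_iff.1 hm, if_true]
  | succ m ih =>
    cases n with
    | zero => simp only [removeLEdgeAux, hp.plen_le_iff.1 hn, if_true]
    | succ n =>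
      have hpos := hp.firstSeg_pos hl
      have htail : removeLEdgeAux l m (fun j => p (j + firstSeg l p)) =
          removeLEdgeAux l n (fun j => p (j + firstSeg l p)) := by
        have hlen := hp.plen_dropParts (firstSeg l p)
        exact ih (hp.isPartition_dropParts _) (hlen.trans_le (by lia)) (hlen.trans_le (by lia))
      simp only [removeLEdgeAux, htail]

theorem removeLEdge_of_edgeLen_le (hp : IsPartition p) (h : edgeLen p ≤ l) :
    removeLEdge l p = fun i => p (i + 1) - 1 := by
  rw [edgeLen] at h
  rcases hn : plen p with _ | n
  · have hzero (i : ℕ) : p i = 0 := hp.plen_le_iff.1 (by lia)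
    simp only [removeLEdge, hn, removeLEdgeAux, hzero, Nat.zero_sub]
  · have hfirst : p 0 ≠ 0 := hp.lt_plen_iff.1 (by lia)
    simp only [removeLEdge, hn, removeLEdgeAux, if_neg hfirst, if_pos (hn ▸ h)]

theorem removeLEdge_of_lt_edgeLen (hp : IsPartition p) (hl : 0 < l) (h : l < edgeLen p) :
    removeLEdge l p = fun i =>
      if i + 1 < firstSeg l p then p (i + 1) - 1
      else if i + 1 = firstSeg l p then p 0 + firstSeg l p - 1 - l
      else removeLEdge l (dropParts (firstSeg l p) p) (i - firstSeg l p) := by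
  have hlt := hp.plen_dropParts_firstSeg_lt hl h
  have hfirst : p 0 ≠ 0 := hp.lt_plen_iff.1 (hp.plen_pos_of_lt_edgeLen h)
  obtain ⟨n, hn⟩ := Nat.exists_eq_succ_of_ne_zero (hp.plen_pos_of_lt_edgeLen h).ne'
  have htail : removeLEdgeAux l n (fun j => p (j + firstSeg l p)) =
      removeLEdge l (dropParts (firstSeg l p) p) :=
    (hp.isPartition_dropParts _).removeLEdgeAux_congr_fuel hl (by lia) le_rfl
  rw [edgeLen] at h
  rw [removeLEdge, hn, removeLEdgeAux, if_neg hfirst, if_neg (hn ▸ h.not_ge), htail]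

theorem removeLEdge_le_pred (hp : IsPartition p) (hl : 0 < l) (i : ℕ) :
    removeLEdge l p i ≤ p i - 1 := by
  induction p, hp using segment_induction hl generalizing i with
  | short p hp h =>
    rw [hp.removeLEdge_of_edgeLen_le h]
    exact Nat.sub_le_sub_right (hp.antitone i.le_succ) 1
  | long p hp h ih =>
    have hmono := hp.antitone i.le_succ
    have hseg := hp.firstSeg_le_iff hl (i := i)
    rw [hp.removeLEdge_of_lt_edgeLen hl h]
    dsimp only
    split_ifs with hbefore hlast
    · lia
    · lia
    · simpa only [dropParts, Nat.sub_add_cancel (show firstSeg l p ≤ i by lia)] using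
        ih (i - firstSeg l p)

theorem antitone_removeLEdge (hp : IsPartition p) (hl : 0 < l) :
    Antitone (removeLEdge l p) := by
  refine antitone_nat_of_succ_le ?_
  induction p, hp using segment_induction hl with
  | short p hp h =>
    rw [hp.removeLEdge_of_edgeLen_le h]
    exact fun i => Nat.sub_le_sub_right (hp.antitone (i + 1).le_succ) 1
  | long p hp h ih =>
    intro i
    have hmono := hp.antitone (i + 1).le_succ
    rw [hp.removeLEdge_of_lt_edgeLen hl h]
    rcases lt_trichotomy (i + 1) (firstSeg l p) with hbefore | hlast | hafter
    · have hseg := hp.firstSeg_le_iff hl (i := i + 1)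
      dsimp only
      split_ifs <;> lia
    · have hbound := (hp.isPartition_dropParts (firstSeg l p)).removeLEdge_le_pred hl 0
      simp only [dropParts, zero_add, ← hlast] at hbound
      have hseg := (hp.firstSeg_le_iff hl).1 hlast.ge
      have hfirst : removeLEdge l (dropParts (firstSeg l p) p) 0 ≤ p 0 + (i + 1) - 1 - l := by
        lia
      simpa only [← hlast, lt_irrefl, if_true, if_false, Nat.sub_self,
        if_neg (show ¬ i + 1 + 1 < i + 1 by lia),
        if_neg (show ¬ i + 1 + 1 = i + 1 by lia)] using hfirst
    · have hstep := ih (i - firstSeg l p)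
      rw [← Nat.sub_add_comm (by lia)] at hstep
      simpa only [if_neg (show ¬ i + 1 < firstSeg l p by lia), hafter.ne',
        if_neg (show ¬ i + 1 + 1 < firstSeg l p by lia),
        if_neg (show ¬ i + 1 + 1 = firstSeg l p by lia), if_false] using hstep

theorem isPartition_removeLEdge (hp : IsPartition p) (hl : 0 < l) :
    IsPartition (removeLEdge l p) :=
  ⟨fun _ _ hij => hp.antitone_removeLEdge hl hij, plen p, fun i hi =>
    Nat.le_zero.1 ((hp.removeLEdge_le_pred hl i).trans_eq (by rw [hp.plen_le_iff.1 hi]))⟩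

theorem dropParts_firstSeg_removeLEdge (hp : IsPartition p) (hl : 0 < l) (h : l < edgeLen p) :
    dropParts (firstSeg l p) (removeLEdge l p) =
      removeLEdge l (dropParts (firstSeg l p) p) := by
  funext i
  rw [hp.removeLEdge_of_lt_edgeLen hl h]
  simp only [dropParts, if_neg (show ¬ i + firstSeg l p + 1 < firstSeg l p by lia),
    if_neg (show ¬ i + firstSeg l p + 1 = firstSeg l p by lia), Nat.add_sub_cancel]

end IsPartition

theorem sum_range_pred_succ_add {n : ℕ} (hpos : ∀ i < n, p (i + 1) ≠ 0) :
    ∑ i ∈ Finset.range n, (p (i + 1) - 1) + (p 0 + n) = ∑ i ∈ Finset.range (n + 1), p i := by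
  have hsucc : ∑ i ∈ Finset.range n, p (i + 1) = ∑ i ∈ Finset.range n, (p (i + 1) - 1 + 1) :=
    Finset.sum_congr rfl fun i hi => (Nat.succ_pred_eq_of_ne_zero
      (hpos i (Finset.mem_range.1 hi))).symm
  rw [Finset.sum_range_succ', hsucc, Finset.sum_add_distrib, Finset.sum_const,
    Finset.card_range, smul_eq_mul]
  ring

namespace IsPartition

theorem sum_range_firstSeg_removeLEdge_add (hp : IsPartition p) (hl : 0 < l)
    (h : l < edgeLen p) :
    ∑ i ∈ Finset.range (firstSeg l p), removeLEdge l p i + l =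
      ∑ i ∈ Finset.range (firstSeg l p), p i := by
  obtain ⟨n, hn⟩ := Nat.exists_eq_succ_of_ne_zero (hp.firstSeg_pos hl).ne'
  have hlt := hp.lt_add_firstSeg hl h
  have hlen := hp.firstSeg_le_plen hl h
  have hinit : ∑ i ∈ Finset.range n, removeLEdge l p i =
      ∑ i ∈ Finset.range n, (p (i + 1) - 1) :=
    Finset.sum_congr rfl fun i hi => by
      have := Finset.mem_range.1 hi
      rw [hp.removeLEdge_of_lt_edgeLen hl h]
      exact if_pos (by lia)
  have hlast : removeLEdge l p n = p 0 + firstSeg l p - 1 - l := by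
    rw [hp.removeLEdge_of_lt_edgeLen hl h]
    exact (if_neg (by lia)).trans (if_pos hn.symm)
  have hshift := sum_range_pred_succ_add (p := p) (n := n)
    fun i hi => hp.lt_plen_iff.1 (by lia)
  rw [hn, Finset.sum_range_succ, hinit, hlast, ← hshift]
  lia

/-! ### The length of the `l`-edge -/

theorem elen_of_edgeLen_le (hp : IsPartition p) (hl : 0 < l) (h : edgeLen p ≤ l) :
    elen l p = edgeLen p := by
  have hrem := hp.removeLEdge_of_edgeLen_le h
  rcases hn : plen p with _ | n
  · rw [elen, edgeLen, pdeg, hn, hp.plen_le_iff.1 hn.le, Finset.sum_range_zero, Nat.zero_sub]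
  · have hlen : plen (removeLEdge l p) ≤ n := by
      rw [(hp.isPartition_removeLEdge hl).plen_le_iff, hrem]
      exact Nat.sub_eq_zero_of_le ((hp.plen_le_iff.1 hn.le).trans_le zero_le_one)
    have hshift := sum_range_pred_succ_add (p := p) (n := n)
      fun i hi => hp.lt_plen_iff.1 (by lia)
    rw [elen, (hp.isPartition_removeLEdge hl).pdeg_eq_sum_range hlen, hrem, pdeg, hn, edgeLen, hn]
    lia

theorem elen_of_lt_edgeLen (hp : IsPartition p) (hl : 0 < l) (h : l < edgeLen p) :
    elen l p = l + elen l (dropParts (firstSeg l p) p) := by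
  have htail := hp.isPartition_dropParts (firstSeg l p)
  have hsegment := hp.sum_range_firstSeg_removeLEdge_add hl h
  have hle := htail.pdeg_le_pdeg (htail.isPartition_removeLEdge hl)
    fun i => (htail.removeLEdge_le_pred hl i).trans (Nat.sub_le _ _)
  rw [elen, hp.pdeg_eq_sum_range_add_pdeg_dropParts (firstSeg l p),
    (hp.isPartition_removeLEdge hl).pdeg_eq_sum_range_add_pdeg_dropParts (firstSeg l p),
    hp.dropParts_firstSeg_removeLEdge hl h, elen]
  lia

theorem lt_edgeLen_of_lt_elen (hp : IsPartition p) (hl : 0 < l) (h : l < elen l p) :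
    l < edgeLen p := by
  by_contra! hle
  exact h.not_ge ((hp.elen_of_edgeLen_le hl hle).trans_le hle)

/-! ### Edge connectedness -/

theorem edgeConnAux_congr_fuel (hp : IsPartition p) (hl : 0 < l) {m n : ℕ}
    (hm : plen p ≤ m) (hn : plen p ≤ n) : edgeConnAux l m p ↔ edgeConnAux l n p := by
  induction p, hp using segment_induction hl generalizing m n with
  | short p hp h =>
    have helen := (hp.elen_of_edgeLen_le hl h).trans_le h
    cases m <;> cases n <;> simp only [edgeConnAux, if_pos helen]
  | long p hp h ih =>
    have hlt := hp.plen_dropParts_firstSeg_lt hl h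
    obtain ⟨m, rfl⟩ := Nat.exists_eq_succ_of_ne_zero (show m ≠ 0 by lia)
    obtain ⟨n, rfl⟩ := Nat.exists_eq_succ_of_ne_zero (show n ≠ 0 by lia)
    have htail : edgeConnAux l m (fun j => p (j + firstSeg l p)) ↔
        edgeConnAux l n (fun j => p (j + firstSeg l p)) := ih (by lia) (by lia)
    simp only [edgeConnAux, htail]

theorem edgeLConnected_of_edgeLen_le (hp : IsPartition p) (hl : 0 < l) (h : edgeLen p ≤ l) :
    EdgeLConnected l p := by
  rw [EdgeLConnected]
  cases plen p with
  | zero => trivial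
  | succ n => rw [edgeConnAux, if_pos ((hp.elen_of_edgeLen_le hl h).trans_le h)]; trivial

theorem edgeLConnected_iff_of_lt_elen (hp : IsPartition p) (hl : 0 < l) (h : l < elen l p) :
    EdgeLConnected l p ↔ p 0 + firstSeg l p = l + p (firstSeg l p) ∧
      EdgeLConnected l (dropParts (firstSeg l p) p) := by
  have hedge := hp.lt_edgeLen_of_lt_elen hl h
  have hlt := hp.plen_dropParts_firstSeg_lt hl hedge
  obtain ⟨n, hn⟩ := Nat.exists_eq_succ_of_ne_zero (hp.plen_pos_of_lt_edgeLen hedge).ne'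
  rw [EdgeLConnected, hn, edgeConnAux, if_neg h.not_ge]
  exact and_congr_right' ((hp.isPartition_dropParts _).edgeConnAux_congr_fuel hl
    (by lia) le_rfl)

theorem edgeLConnected_and_not_dvd_elen_iff_of_lt_edgeLen (hp : IsPartition p) (hl : 0 < l)
    (h : l < edgeLen p) :
    EdgeLConnected l p ∧ ¬ l ∣ elen l p ↔
      p 0 + firstSeg l p = l + p (firstSeg l p) ∧
        EdgeLConnected l (dropParts (firstSeg l p) p) ∧
          ¬ l ∣ elen l (dropParts (firstSeg l p) p) := by
  have helen := hp.elen_of_lt_edgeLen hl h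
  have hdvd : l ∣ elen l p ↔ l ∣ elen l (dropParts (firstSeg l p) p) := by
    rw [helen, Nat.dvd_add_self_left]
  rw [hdvd, ← and_assoc]
  refine and_congr_left fun hndvd => hp.edgeLConnected_iff_of_lt_elen hl ?_
  have htail : elen l (dropParts (firstSeg l p) p) ≠ 0 := fun hzero => hndvd (hzero ▸ dvd_zero l)
  lia

/-! ### Beta-numbers -/

theorem strictAnti_betaNumber (hp : IsPartition p) : StrictAnti (betaNumber p) := by
  intro i j hij
  have hmono := hp.antitone hij.le
  simp only [betaNumber]
  lia

theorem isGreatest_betaSet (hp : IsPartition p) : IsGreatest (betaSet p) (p 0) := by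
  have hzero : betaNumber p 0 = p 0 := by simp only [betaNumber, Nat.cast_zero, sub_zero]
  refine ⟨⟨0, hzero⟩, ?_⟩
  rintro _ ⟨i, rfl⟩
  exact hzero ▸ hp.strictAnti_betaNumber.antitone i.zero_le

theorem mem_betaSet_dropParts_iff (hp : IsPartition p) {h : ℕ} {x : ℤ} :
    x ∈ betaSet (dropParts h p) ↔ x ≤ p h ∧ x - h ∈ betaSet p := by
  have hshift (i : ℕ) : betaNumber (dropParts h p) i = betaNumber p (i + h) + h := by
    simp only [betaNumber, dropParts]
    lia
  constructor
  · rintro ⟨i, rfl⟩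
    refine ⟨?_, i + h, by rw [hshift]; lia⟩
    have hmono := hp.antitone (h.le_add_left i)
    simp only [betaNumber, dropParts]
    lia
  · rintro ⟨hx, i, hi⟩
    have hle : h ≤ i := hp.strictAnti_betaNumber.le_iff_ge.1 (by
      rw [hi, betaNumber]; lia)
    exact ⟨i - h, by rw [hshift, Nat.sub_add_cancel hle]; lia⟩

theorem one_sub_plen_notMem_betaSet (hp : IsPartition p) : 1 - (plen p : ℤ) ∉ betaSet p := by
  rintro ⟨i, hi⟩
  have hlen := hp.plen_le_iff (i := i)
  rw [betaNumber] at hi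
  lia

theorem mem_betaSet_of_le_neg_plen (hp : IsPartition p) {x : ℤ} (hx : x ≤ -plen p) :
    x ∈ betaSet p := by
  have hzero : p (-x).toNat = 0 := hp.plen_le_iff.1 (by lia)
  exact ⟨(-x).toNat, by rw [betaNumber, hzero]; lia⟩

theorem sub_mem_betaSet_iff (hp : IsPartition p) (hl : 0 < l) :
    (p 0 : ℤ) - l ∈ betaSet p ↔ p 0 + firstSeg l p = l + p (firstSeg l p) := by
  constructor
  · rintro ⟨i, hi⟩
    rw [betaNumber] at hi
    have hle : firstSeg l p ≤ i := (hp.firstSeg_le_iff hl).2 (by lia)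
    have hfirst := (hp.firstSeg_le_iff hl).1 le_rfl
    have hmono := hp.antitone hle
    lia
  · exact fun h => ⟨firstSeg l p, by rw [betaNumber]; lia⟩

theorem leadingRunnerFull_iff_of_edgeLen_le (hp : IsPartition p) (h0 : p 0 ≠ 0)
    (h : edgeLen p ≤ l) : LeadingRunnerFull l p ↔ ¬ l ∣ edgeLen p := by
  have hpos : 0 < plen p := hp.lt_plen_iff.2 h0
  rw [edgeLen] at h ⊢
  constructor
  · intro hfull hdvd
    have hle := Nat.le_of_dvd (by lia) hdvd
    have hgap : (p 0 : ℤ) - (1 : ℕ) * l = 1 - plen p := by lia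
    exact hp.one_sub_plen_notMem_betaSet (hgap ▸ hfull 1)
  · intro hndvd k
    have hne : p 0 + plen p - 1 ≠ l := fun heq => hndvd (heq ▸ dvd_rfl)
    rcases k.eq_zero_or_pos with rfl | hk
    · simpa only [Nat.cast_zero, zero_mul, sub_zero] using hp.isGreatest_betaSet.1
    · have hkl : (l : ℤ) ≤ k * l := le_mul_of_one_le_left (by lia) (by lia)
      exact hp.mem_betaSet_of_le_neg_plen (by lia)

theorem leadingRunnerFull_iff_dropParts_firstSeg (hp : IsPartition p) (hl : 0 < l) :
    LeadingRunnerFull l p ↔ p 0 + firstSeg l p = l + p (firstSeg l p) ∧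
      LeadingRunnerFull l (dropParts (firstSeg l p) p) := by
  have htail (hconn : p 0 + firstSeg l p = l + p (firstSeg l p)) (k : ℕ) :
      (dropParts (firstSeg l p) p 0 : ℤ) - k * l ∈ betaSet (dropParts (firstSeg l p) p) ↔
        (p 0 : ℤ) - (k + 1 : ℕ) * l ∈ betaSet p := by
    have hpos : (0 : ℤ) ≤ k * l := by positivity
    have hshift : (p (firstSeg l p) : ℤ) - k * l - firstSeg l p = p 0 - (k + 1 : ℕ) * l := by
      push_cast
      lia
    rw [hp.mem_betaSet_dropParts_iff, dropParts, zero_add, hshift,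
      and_iff_right (sub_le_self _ hpos)]
  constructor
  · intro hfull
    have hconn := (hp.sub_mem_betaSet_iff hl).1 (by
      simpa only [Nat.cast_one, one_mul] using hfull 1)
    exact ⟨hconn, fun k => (htail hconn k).2 (hfull (k + 1))⟩
  · rintro ⟨hconn, hfull⟩ (_ | k)
    · simpa only [Nat.cast_zero, zero_mul, sub_zero] using hp.isGreatest_betaSet.1
    · exact (htail hconn k).1 (hfull k)

theorem edgeLConnected_and_not_dvd_elen_iff (hp : IsPartition p) (hl : 0 < l) (h0 : p 0 ≠ 0) :
    EdgeLConnected l p ∧ ¬ l ∣ elen l p ↔ LeadingRunnerFull l p := by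
  induction p, hp using segment_induction hl with
  | short p hp h =>
    rw [hp.leadingRunnerFull_iff_of_edgeLen_le h0 h, hp.elen_of_edgeLen_le hl h]
    exact and_iff_right (hp.edgeLConnected_of_edgeLen_le hl h)
  | long p hp h ih =>
    rw [hp.edgeLConnected_and_not_dvd_elen_iff_of_lt_edgeLen hl h,
      hp.leadingRunnerFull_iff_dropParts_firstSeg hl]
    refine and_congr_right fun hconn => ih ?_
    have hlt := hp.lt_add_firstSeg hl h
    rw [dropParts, zero_add]
    lia

end IsPartition

/-! ### Hook removal on the abacus -/

namespace IsHookRemoval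

theorem exists_betaNumber_eq (hq : IsHookRemoval l p q) :
    ∃ a b, a ≤ b ∧ (∀ i < a, betaNumber q i = betaNumber p i) ∧
      (∀ i, a ≤ i → i < b → betaNumber q i = betaNumber p (i + 1)) ∧
      betaNumber q b = betaNumber p a - l ∧ ∀ i, b < i → betaNumber q i = betaNumber p i := by
  obtain ⟨-, a, b, hab, hbefore, hinside, hlast, hafter⟩ := hq
  refine ⟨a, b, hab, fun i hi => ?_, fun i hai hib => ?_, ?_, fun i hi => ?_⟩ <;>
    simp only [betaNumber]
  · rw [hbefore i hi]
  · have := hinside i hai hib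
    lia
  · lia
  · rw [hafter i hi]

theorem exists_betaSet_eq (hp : IsPartition p) (hl : 0 < l) (hq : IsHookRemoval l p q) :
    ∃ x ∈ betaSet p, x - l ∉ betaSet p ∧ betaSet q = insert (x - l) (betaSet p \ {x}) := by
  obtain ⟨a, b, hab, hbefore, hinside, hlast, hafter⟩ := hq.exists_betaNumber_eq
  have hinj := hp.strictAnti_betaNumber.injective
  have hkept (i : ℕ) (hi : i ≠ a) : ∃ j ≠ b, betaNumber q j = betaNumber p i := by
    rcases lt_or_gt_of_ne hi with hia | hai
    · exact ⟨i, by lia, hbefore i hia⟩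
    · rcases le_or_gt i b with hib | hbi
      · refine ⟨i - 1, by lia, ?_⟩
        rw [hinside (i - 1) (by lia) (by lia), Nat.sub_add_cancel (by lia)]
      · exact ⟨i, by lia, hafter i hbi⟩
  have hmoved (j : ℕ) (hj : j ≠ b) : ∃ i ≠ a, betaNumber p i = betaNumber q j := by
    rcases lt_or_ge j a with hja | haj
    · exact ⟨j, by lia, (hbefore j hja).symm⟩
    · rcases lt_or_gt_of_ne hj with hjb | hbj
      · exact ⟨j + 1, by lia, (hinside j haj hjb).symm⟩
      · exact ⟨j, by lia, (hafter j hbj).symm⟩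
  refine ⟨betaNumber p a, ⟨a, rfl⟩, ?_, Set.Subset.antisymm ?_ ?_⟩
  · rintro ⟨i, hi⟩
    obtain ⟨j, hj, hji⟩ := hkept i (by rintro rfl; lia)
    exact hj (hq.1.strictAnti_betaNumber.injective (hji.trans (hi.trans hlast.symm)))
  · rintro _ ⟨j, rfl⟩
    by_cases hj : j = b
    · exact Or.inl (hj ▸ hlast)
    · obtain ⟨i, hi, hij⟩ := hmoved j hj
      exact Or.inr ⟨⟨i, hij⟩, fun hx => hi (hinj (hij.trans hx))⟩
  · rintro _ (rfl | ⟨⟨i, rfl⟩, hi⟩)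
    · exact ⟨b, hlast⟩
    · obtain ⟨j, -, hj⟩ := hkept i fun hia => hi (congrArg _ hia)
      exact ⟨j, hj⟩

end IsHookRemoval

theorem LeadingRunnerFull.of_isHookRemoval (hfull : LeadingRunnerFull l p) (hp : IsPartition p)
    (hl : 0 < l) (hq : IsHookRemoval l p q) : q 0 = p 0 ∧ LeadingRunnerFull l q := by
  obtain ⟨x, hx, hgap, hbeta⟩ := hq.exists_betaSet_eq hp hl
  have hmem (k : ℕ) : (p 0 : ℤ) - k * l ∈ betaSet q := by
    have hne : (p 0 : ℤ) - k * l ≠ x := by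
      rintro rfl
      refine hgap ?_
      convert hfull (k + 1) using 1
      push_cast
      ring
    exact hbeta ▸ Set.mem_insert_of_mem _ ⟨hfull k, hne⟩
  have hgreatest : IsGreatest (betaSet q) (p 0) := by
    refine ⟨by simpa only [Nat.cast_zero, zero_mul, sub_zero] using hmem 0, ?_⟩
    rw [hbeta]
    rintro y (rfl | hy)
    · have := hp.isGreatest_betaSet.2 hx
      lia
    · exact hp.isGreatest_betaSet.2 hy.1
  have hfirst : q 0 = p 0 := by
    exact_mod_cast hq.1.isGreatest_betaSet.unique hgreatest
  exact ⟨hfirst, fun k => hfirst ▸ hmem k⟩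

end

/-- Let `λ` be a nonzero edge `l`-connected partition with `l ∤ e_l(λ)`, and let
`λ_H` be obtained from `λ` by removing a skew `l`-hook `H`. Then `λ_H` is edge
`l`-connected, `l ∤ e_l(λ_H)`, and `(λ_H)_1 = λ_1`. -/
theorem hookRemoval_preserves (l : ℕ) (hl : 2 ≤ l) (p q : ℕ → ℕ)
    (hp : IsPartition p) (hne : p 0 ≠ 0)
    (hconn : EdgeLConnected l p) (hndvd : ¬ l ∣ elen l p)
    (hq : IsHookRemoval l p q) :
    EdgeLConnected l q ∧ ¬ l ∣ elen l q ∧ q 0 = p 0 := by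
  have hl0 : 0 < l := by lia
  have hfull := (hp.edgeLConnected_and_not_dvd_elen_iff hl0 hne).1 ⟨hconn, hndvd⟩
  obtain ⟨hfirst, hfullq⟩ := hfull.of_isHookRemoval hp hl0 hq
  obtain ⟨hconnq, hndvdq⟩ :=
    (hq.1.edgeLConnected_and_not_dvd_elen_iff hl0 (hfirst ▸ hne)).2 hfullq
  exact ⟨hconnq, hndvdq, hfirst⟩
end
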